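/- arXiv:2006.14507 — 4 statements merged into one kernel-verified Lean document; each statement's English description precedes it below -/
import Mathlib

section
/- Let Y be a smooth Killing field of Euclidean 3-space and let X be any smooth vector field on Euclidean 3-space. Then div Y vanishes identically, and for every point x one has grad h x = (Y x) × ((curl X) x) + [Y, X] x, where h is the scalar function h y = ⟪X y, Y y⟫. -/
open scoped RealInnerProductSpace

noncomputable section

/-- Euclidean 3-space. -/
abbrev E3 := EuclideanSpace ℝ (Fin 3)

/-- The standard basis vectors e₁, e₂, e₃ (indexed by 0, 1, 2). -/
def e3 (i : Fin 3) : E3 := EuclideanSpace.single i (1 : ℝ)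

/-- Build a point of `E3` from three coordinates. -/
def mk3 (a b c : ℝ) : E3 := (WithLp.equiv 2 (Fin 3 → ℝ)).symm ![a, b, c]

/-- The curl of a vector field:
`(curl X) x = (∂₂X₃ − ∂₃X₂, ∂₃X₁ − ∂₁X₃, ∂₁X₂ − ∂₂X₁)(x)`. -/
def curl3 (X : E3 → E3) (x : E3) : E3 :=
  mk3 (fderiv ℝ X x (e3 1) 2 - fderiv ℝ X x (e3 2) 1)
      (fderiv ℝ X x (e3 2) 0 - fderiv ℝ X x (e3 0) 2)
      (fderiv ℝ X x (e3 0) 1 - fderiv ℝ X x (e3 1) 0)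

/-- The cross product on `E3`. -/
def cross3 (a b : E3) : E3 :=
  mk3 (a 1 * b 2 - a 2 * b 1) (a 2 * b 0 - a 0 * b 2) (a 0 * b 1 - a 1 * b 0)

/-- A vector field is a Killing field iff its derivative is everywhere skew-adjoint. -/
def IsKilling3 (Y : E3 → E3) : Prop :=
  ∀ x v w : E3, ⟪fderiv ℝ Y x v, w⟫ + ⟪v, fderiv ℝ Y x w⟫ = 0

/- The product rule gives `grad ⟪X, Y⟫ = (DX)† Y + (DY)† X`. The antisymmetric part of `DX` is
encoded by the curl, `(DX)† a - DX a = a × curl X`, which turns the first term into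
`DX Y + Y × curl X`; the Killing condition `(DY)† = -DY` turns the second into `-DY X`. -/

section Adjoint

variable {𝕜 E : Type*} [RCLike 𝕜] [NormedAddCommGroup E] [InnerProductSpace 𝕜 E] [CompleteSpace E]

theorem mem_skewAdjoint_iff_inner {A : E →L[𝕜] E} :
    A ∈ skewAdjoint (E →L[𝕜] E) ↔ ∀ v w, inner 𝕜 (A v) w + inner 𝕜 v (A w) = 0 := by
  rw [skewAdjoint.mem_iff, ContinuousLinearMap.star_eq_adjoint, eq_comm,
    ContinuousLinearMap.eq_adjoint_iff]
  simp only [neg_apply, inner_neg_left, neg_eq_iff_add_eq_zero]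

theorem re_inner_apply_self_eq_zero_of_mem_skewAdjoint {A : E →L[𝕜] E}
    (hA : A ∈ skewAdjoint (E →L[𝕜] E)) (v : E) : RCLike.re (inner 𝕜 (A v) v) = 0 := by
  have h := congrArg RCLike.re (mem_skewAdjoint_iff_inner.mp hA v v)
  rw [map_add, inner_re_symm v, map_zero] at h
  exact self_eq_neg.mp (eq_neg_of_add_eq_zero_left h)

end Adjoint

section Coordinates

variable {𝕜 ι κ : Type*} [RCLike 𝕜] [Fintype ι] [DecidableEq ι]

theorem euclideanSpace_clm_apply (A : EuclideanSpace 𝕜 ι →L[𝕜] EuclideanSpace 𝕜 κ)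
    (a : EuclideanSpace 𝕜 ι) (i : κ) :
    A a i = ∑ j, a j * A (EuclideanSpace.single j 1) i := by
  conv_lhs => rw [← (EuclideanSpace.basisFun ι 𝕜).sum_repr a]
  simp

theorem euclideanSpace_adjoint_apply [Fintype κ]
    (A : EuclideanSpace 𝕜 ι →L[𝕜] EuclideanSpace 𝕜 κ) (a : EuclideanSpace 𝕜 κ) (i : ι) :
    A.adjoint a i = ∑ j, a j * star (A (EuclideanSpace.single i 1) j) := by
  rw [← EuclideanSpace.basisFun_inner, ContinuousLinearMap.adjoint_inner_right,
    EuclideanSpace.basisFun_apply, PiLp.inner_apply]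
  simp only [RCLike.inner_apply, starRingEnd_apply]

end Coordinates

theorem hasGradientAt_inner {E F : Type*}
    [NormedAddCommGroup E] [InnerProductSpace ℝ E] [CompleteSpace E]
    [NormedAddCommGroup F] [InnerProductSpace ℝ F] [CompleteSpace F]
    {f g : E → F} {f' g' : E →L[ℝ] F} {x : E}
    (hf : HasFDerivAt f f' x) (hg : HasFDerivAt g g' x) :
    HasGradientAt (fun y => ⟪f y, g y⟫) (f'.adjoint (g x) + g'.adjoint (f x)) x := by
  refine hasGradientAt_iff_hasFDerivAt.mpr ((hf.inner ℝ hg).congr_fderiv ?_)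
  ext v
  simp only [ContinuousLinearMap.comp_apply, ContinuousLinearMap.prod_apply,
    fderivInnerCLM_apply, InnerProductSpace.toDual_apply_apply, inner_add_left,
    ContinuousLinearMap.adjoint_inner_left]
  rw [real_inner_comm (g x), add_comm]

theorem cross3_curl3_eq_adjoint_sub (X : E3 → E3) (x a : E3) :
    cross3 a (curl3 X x) = (fderiv ℝ X x).adjoint a - fderiv ℝ X x a := by
  ext i
  rw [PiLp.sub_apply, euclideanSpace_adjoint_apply, euclideanSpace_clm_apply]
  simp only [cross3, curl3, mk3, e3, WithLp.equiv_symm_apply, Fin.sum_univ_three, star_trivial]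
  fin_cases i <;>
    simp only [Fin.zero_eta, Fin.mk_one, Fin.reduceFinMk, Matrix.cons_val] <;>
    ring

theorem killing_div_free_and_grad_identity_general {Y X : E3 → E3} {x : E3}
    (hY : DifferentiableAt ℝ Y x) (hX : DifferentiableAt ℝ X x)
    (hK : fderiv ℝ Y x ∈ skewAdjoint (E3 →L[ℝ] E3)) :
    ∑ i, ⟪fderiv ℝ Y x (e3 i), e3 i⟫ = 0 ∧
    gradient (fun y => ⟪X y, Y y⟫) x
      = cross3 (Y x) (curl3 X x) + (fderiv ℝ X x (Y x) - fderiv ℝ Y x (X x)) := by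
  refine ⟨Finset.sum_eq_zero fun i _ =>
    re_inner_apply_self_eq_zero_of_mem_skewAdjoint hK (e3 i), ?_⟩
  have adjoint_eq_neg : (fderiv ℝ Y x).adjoint = -fderiv ℝ Y x := skewAdjoint.mem_iff.mp hK
  calc gradient (fun y => ⟪X y, Y y⟫) x
      = (fderiv ℝ X x).adjoint (Y x) + (fderiv ℝ Y x).adjoint (X x) :=
        (hasGradientAt_inner hX.hasFDerivAt hY.hasFDerivAt).gradient
    _ = (fderiv ℝ X x).adjoint (Y x) - fderiv ℝ Y x (X x) := by
        rw [adjoint_eq_neg, neg_apply, sub_eq_add_neg]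
    _ = cross3 (Y x) (curl3 X x) + (fderiv ℝ X x (Y x) - fderiv ℝ Y x (X x)) := by
        rw [cross3_curl3_eq_adjoint_sub]; abel

/-- A smooth Killing field `Y` of Euclidean 3-space is divergence-free,
and for every smooth vector field `X`, with `h y = ⟪X y, Y y⟫`, one has
`grad h x = (Y x) × ((curl X) x) + [Y, X] x`. -/
theorem killing_div_free_and_grad_identity (Y X : E3 → E3)
    (hY : ContDiff ℝ (⊤ : ℕ∞) Y) (hX : ContDiff ℝ (⊤ : ℕ∞) X) (hK : IsKilling3 Y) :
    (∀ x : E3, ∑ i, ⟪fderiv ℝ Y x (e3 i), e3 i⟫ = 0) ∧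
    (∀ x : E3, gradient (fun y => ⟪X y, Y y⟫) x
        = cross3 (Y x) (curl3 X x) + (fderiv ℝ X x (Y x) - fderiv ℝ Y x (X x))) := by
  have pointwise := fun x => killing_div_free_and_grad_identity_general
    (hY.differentiable (by simp) x) (hX.differentiable (by simp) x)
    (mem_skewAdjoint_iff_inner.mpr (hK x))
  exact ⟨fun x => (pointwise x).1, fun x => (pointwise x).2⟩
end
end

section
/- Every smooth Killing field Y of Euclidean 3-space commutes with its own curl: for every x one has fderiv ℝ (curl Y) x (Y x) − fderiv ℝ Y x ((curl Y) x) = 0, i.e. [Y, curl Y] ≡ 0. -/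
open scoped RealInnerProductSpace

noncomputable section

/-!
Integrating `⟪DY v, v⟫ = 0` along the segment from `y` to `x` gives `⟪Y x - Y y, x - y⟫ = 0`, which
polarizes to `⟪Y x - Y z, w - z⟫ = -⟪x - z, Y w - Y z⟫`. The right-hand side is affine in `x`, so
`DY` is constant, and with it `curl Y`: the first term of the bracket vanishes. The second one does
because `DY`, being skew, is `v ↦ ½ curl Y × v`, which kills `curl Y`.
-/

section SkewDerivative

variable {F : Type*} [NormedAddCommGroup F] [InnerProductSpace ℝ F] {Y : F → F}

theorem inner_sub_sub_eq_zero_of_inner_fderiv_self_eq_zero (hY : Differentiable ℝ Y)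
    (hskew : ∀ x v, ⟪fderiv ℝ Y x v, v⟫ = 0) (x y : F) : ⟪Y x - Y y, x - y⟫ = 0 := by
  have hderiv (t : ℝ) : HasDerivAt (fun s ↦ ⟪Y (AffineMap.lineMap y x s), x - y⟫) 0 t := by
    have hcomp := (hY _).hasFDerivAt.comp_hasDerivAt t
      (AffineMap.hasDerivAt_lineMap (a := y) (b := x))
    simpa only [Function.comp_def, hskew, inner_zero_right, add_zero] using
      hcomp.inner ℝ (hasDerivAt_const t (x - y))
  have hconst := is_const_of_deriv_eq_zero (fun t ↦ (hderiv t).differentiableAt)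
    (fun t ↦ (hderiv t).deriv) 1 0
  simpa [inner_sub_left, sub_eq_zero] using hconst

theorem inner_sub_sub_eq_neg_of_inner_sub_sub_eq_zero
    (h : ∀ x y, ⟪Y x - Y y, x - y⟫ = 0) (x w z : F) :
    ⟪Y x - Y z, w - z⟫ = -⟪x - z, Y w - Y z⟫ := by
  have hexpand : ⟪Y x - Y w, x - w⟫ = ⟪Y x - Y z, x - z⟫ + ⟪Y w - Y z, w - z⟫
      - ⟪Y x - Y z, w - z⟫ - ⟪x - z, Y w - Y z⟫ := by
    rw [← sub_sub_sub_cancel_right (Y x) (Y w) (Y z), ← sub_sub_sub_cancel_right x w z,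
      inner_sub_left, inner_sub_right _ (x - z), inner_sub_right _ (x - z),
      real_inner_comm (x - z) (Y w - Y z)]
    ring
  linarith [h x w, h x z, h w z]

theorem inner_fderiv_eq_neg_inner_sub_of_inner_fderiv_self_eq_zero (hY : Differentiable ℝ Y)
    (hskew : ∀ x v, ⟪fderiv ℝ Y x v, v⟫ = 0) (x v w : F) :
    ⟪fderiv ℝ Y x v, w⟫ = -⟪v, Y w - Y 0⟫ := by
  have hpolar (y : F) : ⟪Y y, w⟫ = ⟪Y 0, w⟫ - ⟪y, Y w - Y 0⟫ := by
    have := inner_sub_sub_eq_neg_of_inner_sub_sub_eq_zero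
      (inner_sub_sub_eq_zero_of_inner_fderiv_self_eq_zero hY hskew) y w 0
    rw [sub_zero, sub_zero, inner_sub_left] at this
    linarith
  have hleft := (hY x).hasFDerivAt.inner ℝ (hasFDerivAt_const w x)
  have hright := ((hasFDerivAt_id x).inner ℝ (hasFDerivAt_const (Y w - Y 0) x)).const_sub ⟪Y 0, w⟫
  simpa using DFunLike.congr_fun (hleft.unique (hright.congr_of_eventuallyEq (.of_forall hpolar))) v

theorem fderiv_eq_fderiv_of_inner_fderiv_self_eq_zero (hY : Differentiable ℝ Y)
    (hskew : ∀ x v, ⟪fderiv ℝ Y x v, v⟫ = 0) (x y : F) : fderiv ℝ Y x = fderiv ℝ Y y := by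
  ext1 v
  refine ext_inner_right ℝ fun w ↦ ?_
  rw [inner_fderiv_eq_neg_inner_sub_of_inner_fderiv_self_eq_zero hY hskew,
    inner_fderiv_eq_neg_inner_sub_of_inner_fderiv_self_eq_zero hY hskew]

end SkewDerivative

theorem E3.eq_sum_smul_e3 (v : E3) : v = v 0 • e3 0 + v 1 • e3 1 + v 2 • e3 2 := by
  ext i
  fin_cases i <;> simp [e3]

theorem cross3_self (a : E3) : cross3 a a = 0 := by
  ext i
  fin_cases i <;> simp [cross3, mk3, mul_comm]

theorem inner_cross3_curl3 (X : E3 → E3) (x v w : E3) :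
    ⟪cross3 (curl3 X x) v, w⟫ = ⟪fderiv ℝ X x v, w⟫ - ⟪v, fderiv ℝ X x w⟫ := by
  have hcoord (u : E3) (j : Fin 3) : fderiv ℝ X x u j =
      u 0 * fderiv ℝ X x (e3 0) j + u 1 * fderiv ℝ X x (e3 1) j + u 2 * fderiv ℝ X x (e3 2) j := by
    conv_lhs => rw [E3.eq_sum_smul_e3 u]
    simp
  simp only [PiLp.inner_apply, Fin.sum_univ_three, hcoord v, hcoord w]
  simp only [cross3, curl3, mk3, WithLp.equiv_symm_apply, Matrix.cons_val_zero,
    Matrix.cons_val_one, Matrix.cons_val, RCLike.inner_apply, Real.ringHom_apply]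
  ring

namespace IsKilling3

variable {Y : E3 → E3}

theorem inner_fderiv_self_eq_zero (hK : IsKilling3 Y) (x v : E3) : ⟪fderiv ℝ Y x v, v⟫ = 0 := by
  have := hK x v v
  rw [real_inner_comm (fderiv ℝ Y x v) v] at this
  linarith

theorem cross3_curl3 (hK : IsKilling3 Y) (x v : E3) :
    cross3 (curl3 Y x) v = (2 : ℝ) • fderiv ℝ Y x v := by
  refine ext_inner_right ℝ fun w ↦ ?_
  rw [inner_cross3_curl3, real_inner_smul_left]
  linarith [hK x v w]

theorem fderiv_curl3_self (hK : IsKilling3 Y) (x : E3) : fderiv ℝ Y x (curl3 Y x) = 0 := by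
  simpa [cross3_self] using (hK.cross3_curl3 x (curl3 Y x)).symm

theorem curl3_eq_curl3 (hK : IsKilling3 Y) (hY : Differentiable ℝ Y) (x y : E3) :
    curl3 Y x = curl3 Y y := by
  simp only [curl3,
    fderiv_eq_fderiv_of_inner_fderiv_self_eq_zero hY hK.inner_fderiv_self_eq_zero x y]

end IsKilling3

theorem killing_commutes_with_curl_general (Y : E3 → E3)
    (hY : Differentiable ℝ Y) (hK : IsKilling3 Y) :
    ∀ x : E3, fderiv ℝ (curl3 Y) x (Y x) - fderiv ℝ Y x (curl3 Y x) = 0 := by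
  intro x
  have hconst : curl3 Y = fun _ ↦ curl3 Y x := funext fun y ↦ hK.curl3_eq_curl3 hY y x
  have hcurl : fderiv ℝ (curl3 Y) x = 0 := by rw [hconst, fderiv_fun_const, Pi.zero_apply]
  rw [hcurl, zero_apply, hK.fderiv_curl3_self, sub_zero]

/-- Every smooth Killing field `Y` of Euclidean 3-space commutes with its
own curl: `[Y, curl Y] ≡ 0`. -/
theorem killing_commutes_with_curl (Y : E3 → E3)
    (hY : ContDiff ℝ (⊤ : ℕ∞) Y) (hK : IsKilling3 Y) :
    ∀ x : E3, fderiv ℝ (curl3 Y) x (Y x) - fderiv ℝ Y x (curl3 Y x) = 0 :=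
  killing_commutes_with_curl_general Y (hY.differentiable (by simp)) hK
end
end

section
/- Let Y be a smooth Killing field of Euclidean 3-space, let λ ∈ ℝ, and let X be a smooth vector field with (curl X) x = λ • X x for all x and [Y, X] x = 0 for all x. Then both X and Y are tangent to the level sets of the function h y = ⟪X y, Y y⟫: for every x one has fderiv ℝ h x (X x) = 0 and fderiv ℝ h x (Y x) = 0. -/
/-!
In the language of forms, `curl X = λ • X` says that the interior product of `X` with the exterior
derivative of `⟪X, ·⟫` vanishes, i.e. `⟪DX X, w⟫ = ⟪DX w, X⟫` for all `w`. A Killing field `Y`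
preserves the metric, so differentiating `⟪X, Y⟫` along `Y` only produces the brackets `[Y, X]` and
`[Y, Y]`, both zero. Along `X`, taking `w = Y` above replaces `DX X` by `DX Y`, which is again
`[Y, X]` up to the skew-adjoint term `DY X`.
-/

open scoped RealInnerProductSpace

noncomputable section

section InnerProductSpace

open VectorField

variable {E : Type*} [NormedAddCommGroup E] [InnerProductSpace ℝ E] {X Y Z : E → E} {x : E}

theorem fderiv_inner_apply_eq_inner_lieBracket_add
    (hX : DifferentiableAt ℝ X x) (hZ : DifferentiableAt ℝ Z x)
    (hYskew : ∀ v w : E, ⟪fderiv ℝ Y x v, w⟫ + ⟪v, fderiv ℝ Y x w⟫ = 0) :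
    fderiv ℝ (fun y => ⟪X y, Z y⟫) x (Y x) =
      ⟪lieBracket ℝ Y X x, Z x⟫ + ⟪X x, lieBracket ℝ Y Z x⟫ := by
  rw [fderiv_inner_apply ℝ hX hZ, lieBracket_eq, lieBracket_eq, inner_sub_left, inner_sub_right]
  linear_combination hYskew (X x) (Z x)

theorem fderiv_inner_apply_self_eq_inner_lieBracket
    (hX : DifferentiableAt ℝ X x) (hY : DifferentiableAt ℝ Y x)
    (hXsymm : ⟪fderiv ℝ X x (X x), Y x⟫ = ⟪fderiv ℝ X x (Y x), X x⟫)
    (hYskew : ⟪fderiv ℝ Y x (X x), X x⟫ + ⟪X x, fderiv ℝ Y x (X x)⟫ = 0) :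
    fderiv ℝ (fun y => ⟪X y, Y y⟫) x (X x) = ⟪lieBracket ℝ Y X x, X x⟫ := by
  rw [fderiv_inner_apply ℝ hX hY, hXsymm, lieBracket_eq, inner_sub_left]
  linear_combination hYskew

theorem tangent_to_level_sets_general
    (hX : DifferentiableAt ℝ X x) (hY : DifferentiableAt ℝ Y x)
    (hYskew : ∀ v w : E, ⟪fderiv ℝ Y x v, w⟫ + ⟪v, fderiv ℝ Y x w⟫ = 0)
    (hXsymm : ⟪fderiv ℝ X x (X x), Y x⟫ = ⟪fderiv ℝ X x (Y x), X x⟫)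
    (hcomm : lieBracket ℝ Y X x = 0) :
    fderiv ℝ (fun y => ⟪X y, Y y⟫) x (X x) = 0 ∧
      fderiv ℝ (fun y => ⟪X y, Y y⟫) x (Y x) = 0 := by
  constructor
  · rw [fderiv_inner_apply_self_eq_inner_lieBracket hX hY hXsymm (hYskew _ _), hcomm,
      inner_zero_left]
  · rw [fderiv_inner_apply_eq_inner_lieBracket_add hX hY hYskew, hcomm, lieBracket_self,
      Pi.zero_apply, inner_zero_left, inner_zero_right, add_zero]

end InnerProductSpace

theorem inner_cross3_self_left (u v : E3) : ⟪u, cross3 u v⟫ = 0 := by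
  simp only [cross3, mk3, PiLp.inner_apply, Fin.sum_univ_three, RCLike.inner_apply, conj_trivial,
    WithLp.equiv_symm_apply, Matrix.cons_val]
  ring

theorem sum_smul_e3 (v : E3) : ∑ i, v i • e3 i = v := by
  simpa only [e3, EuclideanSpace.basisFun_repr, EuclideanSpace.basisFun_apply] using
    (EuclideanSpace.basisFun (Fin 3) ℝ).sum_repr v

theorem inner_fderiv_sub_inner_fderiv_eq_inner_curl3 (X : E3 → E3) (x u v : E3) :
    ⟪fderiv ℝ X x u, v⟫ - ⟪fderiv ℝ X x v, u⟫ = ⟪curl3 X x, cross3 u v⟫ := by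
  have fderiv_eq_sum (w : E3) : fderiv ℝ X x w = ∑ i, w i • fderiv ℝ X x (e3 i) := by
    simpa only [map_sum, map_smul] using congrArg (fderiv ℝ X x) (sum_smul_e3 w).symm
  rw [fderiv_eq_sum u, fderiv_eq_sum v]
  simp only [curl3, cross3, mk3, PiLp.inner_apply, Fin.sum_univ_three, RCLike.inner_apply,
    conj_trivial, WithLp.equiv_symm_apply, Matrix.cons_val, PiLp.add_apply, PiLp.smul_apply,
    smul_eq_mul]
  ring

theorem inner_fderiv_self_of_curl3_eq_smul {X : E3 → E3} {x : E3} {c : ℝ}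
    (h : curl3 X x = c • X x) (w : E3) :
    ⟪fderiv ℝ X x (X x), w⟫ = ⟪fderiv ℝ X x w, X x⟫ := by
  rw [← sub_eq_zero, inner_fderiv_sub_inner_fderiv_eq_inner_curl3, h, real_inner_smul_left,
    inner_cross3_self_left, mul_zero]

/-- If `Y` is a smooth Killing field of Euclidean 3-space and `X` is a
smooth vector field with `curl X = λ • X` and `[Y, X] ≡ 0`, then both `X` and `Y` are
tangent to the level sets of `h y = ⟪X y, Y y⟫`. -/
theorem tangent_to_level_sets (Y : E3 → E3) (lam : ℝ) (X : E3 → E3)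
    (hY : ContDiff ℝ (⊤ : ℕ∞) Y) (hX : ContDiff ℝ (⊤ : ℕ∞) X) (hK : IsKilling3 Y)
    (hBel : ∀ x : E3, curl3 X x = lam • X x)
    (hcomm : ∀ x : E3, fderiv ℝ X x (Y x) - fderiv ℝ Y x (X x) = 0) :
    ∀ x : E3, fderiv ℝ (fun y => ⟪X y, Y y⟫) x (X x) = 0 ∧
      fderiv ℝ (fun y => ⟪X y, Y y⟫) x (Y x) = 0 := by
  intro x
  exact tangent_to_level_sets_general (hX.differentiable (by simp) x)
    (hY.differentiable (by simp) x) (hK x) (inner_fderiv_self_of_curl3_eq_smul (hBel x) _) (hcomm x)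
end
end

section
/- Let Ω ⊆ Euclidean 3-space be a nonempty open connected set, let Y be the rotation field Y (x₁,x₂,x₃) = (−x₂, x₁, 0), let λ ≠ 0, and let X be a vector field that is real analytic on Ω, satisfies (curl X) x = λ • X x for all x ∈ Ω, and does not vanish identically on Ω. Then X cannot be everywhere collinear with Y: there exists p ∈ Ω with (Y p) × (X p) ≠ 0. -/
open scoped RealInnerProductSpace

noncomputable section

/-- The rotation field `Y (x₁,x₂,x₃) = (−x₂, x₁, 0)`. -/
def Yrot : E3 → E3 := fun x => mk3 (-(x 1)) (x 0) 0

/-!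
Whether the helicity density `⟪X, curl X⟫` of a field vanishes depends only on its direction: since
`curl (g • Y) = g • curl Y + ∇g × Y` and `∇g × Y` is orthogonal to `Y`, the helicity density of
`g • Y` is `g² ⟪Y, curl Y⟫`. The rotation field has helicity density zero, because its curl points
along the axis. A field `X` collinear with it is locally of the form `g • Y` off the axis, so its
helicity density vanishes there; but for a Beltrami field this density is `λ ‖X‖²`. Hence `X`
vanishes off the axis and, by continuity, everywhere.
-/

open Filter Matrix

open scoped Topology Gradient

section Coordinates

variable (a b c : ℝ)

@[simp]
theorem mk3_apply_zero : mk3 a b c 0 = a := rfl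

@[simp]
theorem mk3_apply_one : mk3 a b c 1 = b := rfl

@[simp]
theorem mk3_apply_two : mk3 a b c 2 = c := rfl

end Coordinates

section CrossProduct

theorem cross3_eq_toLp_crossProduct (a b : E3) : cross3 a b = WithLp.toLp 2 (a.ofLp ⨯₃ b.ofLp) := by
  rw [cross_apply]
  rfl

theorem inner_cross3_self (a b : E3) : ⟪b, cross3 a b⟫ = 0 := by
  rw [EuclideanSpace.inner_eq_star_dotProduct, cross3_eq_toLp_crossProduct, dotProduct_comm]
  exact dot_cross_self a.ofLp b.ofLp

theorem exists_smul_eq_of_cross3_eq_zero {a b : E3} (ha : a ≠ 0) (hab : cross3 a b = 0) :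
    ∃ c : ℝ, c • a = b := by
  have ha' : a.ofLp ≠ 0 := by simpa using ha
  have hdep : ¬ LinearIndependent ℝ ![a.ofLp, b.ofLp] := by
    rw [← crossProduct_ne_zero_iff_linearIndependent, not_not]
    simpa [cross3_eq_toLp_crossProduct] using hab
  obtain ⟨c, hc⟩ := not_forall_not.mp (mt (LinearIndependent.pair_iff' ha').mpr hdep)
  exact ⟨c, WithLp.ofLp_injective 2 hc⟩

theorem inner_div_inner_smul_eq_of_cross3_eq_zero {a b : E3} (ha : a ≠ 0) (hab : cross3 a b = 0) :
    (⟪a, b⟫ / ⟪a, a⟫) • a = b := by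
  obtain ⟨c, rfl⟩ := exists_smul_eq_of_cross3_eq_zero ha hab
  rw [real_inner_smul_right, mul_div_cancel_right₀ _ (inner_self_ne_zero.mpr ha)]

end CrossProduct

section Curl

variable {X Y : E3 → E3} {x : E3}

theorem curl3_congr_of_eventuallyEq (h : X =ᶠ[𝓝 x] Y) : curl3 X x = curl3 Y x := by
  simp only [curl3, h.fderiv_eq]

theorem gradient_apply_eq_fderiv_e3 (g : E3 → ℝ) (x : E3) (i : Fin 3) :
    ∇ g x i = fderiv ℝ g x (e3 i) := by
  rw [← inner_gradient_left, e3, EuclideanSpace.inner_single_right]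
  simp

theorem curl3_smul {g : E3 → ℝ} (hg : DifferentiableAt ℝ g x) (hX : DifferentiableAt ℝ X x) :
    curl3 (fun y => g y • X y) x = g x • curl3 X x + cross3 (∇ g x) (X x) := by
  ext i
  fin_cases i <;>
    simp only [curl3, cross3, Fin.zero_eta, Fin.mk_one, Fin.reduceFinMk, mk3_apply_zero,
      mk3_apply_one, mk3_apply_two, PiLp.add_apply, PiLp.smul_apply, smul_eq_mul,
      fderiv_fun_smul hg hX, _root_.add_apply, _root_.smul_apply,
      ContinuousLinearMap.smulRight_apply, gradient_apply_eq_fderiv_e3] <;>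
    ring

/-- The helicity density `⟪X, curl X⟫` of a vector field. It vanishes identically exactly when the
planes orthogonal to `X` satisfy the Frobenius integrability condition `X♭ ∧ dX♭ = 0`. -/
def helicityDensity (X : E3 → E3) (x : E3) : ℝ := ⟪X x, curl3 X x⟫

theorem helicityDensity_congr_of_eventuallyEq (h : X =ᶠ[𝓝 x] Y) :
    helicityDensity X x = helicityDensity Y x := by
  rw [helicityDensity, helicityDensity, h.eq_of_nhds, curl3_congr_of_eventuallyEq h]

theorem helicityDensity_smul {g : E3 → ℝ} (hg : DifferentiableAt ℝ g x)
    (hX : DifferentiableAt ℝ X x) :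
    helicityDensity (fun y => g y • X y) x = g x ^ 2 * helicityDensity X x := by
  simp only [helicityDensity, curl3_smul hg hX, inner_add_right, real_inner_smul_left,
    real_inner_smul_right, inner_cross3_self]
  ring

theorem helicityDensity_of_curl3_eq_smul {c : ℝ} (h : curl3 X x = c • X x) :
    helicityDensity X x = c * ‖X x‖ ^ 2 := by
  rw [helicityDensity, h, real_inner_smul_right, real_inner_self_eq_norm_sq]

theorem helicityDensity_eq_zero_of_eventually_cross3_eq_zero (hX : DifferentiableAt ℝ X x)
    (hY : DifferentiableAt ℝ Y x) (hYx : Y x ≠ 0) (hYhel : helicityDensity Y x = 0)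
    (hYX : ∀ᶠ y in 𝓝 x, cross3 (Y y) (X y) = 0) : helicityDensity X x = 0 := by
  let g : E3 → ℝ := fun y => ⟪Y y, X y⟫ / ⟪Y y, Y y⟫
  have hXeq : X =ᶠ[𝓝 x] fun y => g y • Y y := by
    filter_upwards [hYX, hY.continuousAt.eventually_ne hYx] with y hy hYy
    exact (inner_div_inner_smul_eq_of_cross3_eq_zero hYy hy).symm
  have hg : DifferentiableAt ℝ g x :=
    (hY.inner ℝ hX).fun_mul ((hY.inner ℝ hY).fun_inv (inner_self_ne_zero.mpr hYx))
  rw [helicityDensity_congr_of_eventuallyEq hXeq, helicityDensity_smul hg hY, hYhel, mul_zero]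

end Curl

section RotationField

theorem isLinearMap_Yrot : IsLinearMap ℝ Yrot where
  map_add x y := by ext i; fin_cases i <;> simp [Yrot, add_comm]
  map_smul c x := by ext i; fin_cases i <;> simp [Yrot]

theorem hasFDerivAt_Yrot (x : E3) :
    HasFDerivAt Yrot (isLinearMap_Yrot.mk' Yrot).toContinuousLinearMap x :=
  (isLinearMap_Yrot.mk' Yrot).toContinuousLinearMap.hasFDerivAt

theorem differentiable_Yrot : Differentiable ℝ Yrot :=
  fun x => (hasFDerivAt_Yrot x).differentiableAt

theorem curl3_Yrot (x : E3) : curl3 Yrot x = mk3 0 0 2 := by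
  ext i
  fin_cases i <;> simp [curl3, (hasFDerivAt_Yrot x).fderiv, Yrot, e3, one_add_one_eq_two]

theorem helicityDensity_Yrot (x : E3) : helicityDensity Yrot x = 0 := by
  simp [helicityDensity, curl3_Yrot, Yrot, PiLp.inner_apply, Fin.sum_univ_three]

theorem dense_Yrot_ne_zero : Dense {x | Yrot x ≠ 0} := by
  let L := isLinearMap_Yrot.mk' Yrot
  have hL : Yrot (e3 0) ≠ 0 := fun h => by
    simpa [Yrot, e3] using congrArg (fun v : E3 => v 1) h
  refine interior_eq_empty_iff_dense_compl.mp (Set.not_nonempty_iff_eq_empty.mp fun hne => hL ?_)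
  have hker : LinearMap.ker L = ⊤ := (LinearMap.ker L).eq_top_of_nonempty_interior' hne
  exact LinearMap.mem_ker.mp (hker ▸ Submodule.mem_top : e3 0 ∈ LinearMap.ker L)

end RotationField

theorem beltrami_not_collinear_with_rotation_general {Ω : Set E3} (hΩ : IsOpen Ω)
    {X Y : E3 → E3} {f : E3 → ℝ} (hf : ∀ x ∈ Ω, f x ≠ 0) (hX : DifferentiableOn ℝ X Ω)
    (hcurl : ∀ x ∈ Ω, curl3 X x = f x • X x) (hXne : ∃ x ∈ Ω, X x ≠ 0)
    (hY : DifferentiableOn ℝ Y Ω) (hYhel : ∀ x ∈ Ω, helicityDensity Y x = 0)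
    (hYdense : Ω ⊆ closure {x | Y x ≠ 0}) :
    ∃ p ∈ Ω, cross3 (Y p) (X p) ≠ 0 := by
  by_contra! hcol
  obtain ⟨p, hpΩ, hXp⟩ := hXne
  have hnear : ∀ᶠ q in 𝓝 p, q ∈ Ω ∧ X q ≠ 0 :=
    (hΩ.eventually_mem hpΩ).and
      ((hX.differentiableAt (hΩ.mem_nhds hpΩ)).continuousAt.eventually_ne hXp)
  obtain ⟨q, hYq, hqΩ, hXq⟩ :=
    ((mem_closure_iff_frequently.mp (hYdense hpΩ)).and_eventually hnear).exists
  have hqnhds : Ω ∈ 𝓝 q := hΩ.mem_nhds hqΩ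
  have hhel : f q * ‖X q‖ ^ 2 = 0 := by
    rw [← helicityDensity_of_curl3_eq_smul (hcurl q hqΩ)]
    exact helicityDensity_eq_zero_of_eventually_cross3_eq_zero (hX.differentiableAt hqnhds)
      (hY.differentiableAt hqnhds) hYq (hYhel q hqΩ) (eventually_of_mem hqnhds hcol)
  exact mul_ne_zero (hf q hqΩ) (pow_ne_zero 2 (norm_ne_zero_iff.mpr hXq)) hhel

/-- On a nonempty open connected set `Ω`, a real analytic Beltrami field
(with eigenvalue `λ ≠ 0`) that does not vanish identically cannot be everywhere collinear
with the rotation field `Y (x₁,x₂,x₃) = (−x₂, x₁, 0)`. -/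
theorem beltrami_not_collinear_with_rotation (Ω : Set E3)
    (hΩopen : IsOpen Ω) (hΩne : Ω.Nonempty) (hΩconn : IsConnected Ω)
    (lam : ℝ) (hlam : lam ≠ 0) (X : E3 → E3)
    (hXan : AnalyticOnNhd ℝ X Ω)
    (hBel : ∀ x ∈ Ω, curl3 X x = lam • X x)
    (hXne : ∃ x ∈ Ω, X x ≠ 0) :
    ∃ p ∈ Ω, cross3 (Yrot p) (X p) ≠ 0 :=
  beltrami_not_collinear_with_rotation_general hΩopen (fun _ _ => hlam) hXan.differentiableOn hBel
    hXne differentiable_Yrot.differentiableOn (fun x _ => helicityDensity_Yrot x)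
    (fun x _ => dense_Yrot_ne_zero x)
end
end
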